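/- Let f : ℝⁿ → ℝ be a continuous positive-valued function with epigraph L, and let K ⊆ ℝⁿ × ℝ be a closed set with K ∩ L = ∅. If there exist no point x₀ ∈ ℝⁿ and real numbers 0 < y₁ < y₂ such that (x₀,y₁) ∉ K and (x₀,y₂) ∈ K, then for every x ∈ ℝⁿ there is at most one y ∈ ℝ with d((x,y),K) = d((x,y),L) (each vertical line contains at most one equidistant point). -/

import Mathlib

open Metric Set

noncomputable section

/-- `ℝⁿ × ℝ` with the Euclidean (ℓ²) metric. -/
abbrev EucProd (n : ℕ) := WithLp 2 (EuclideanSpace ℝ (Fin n) × ℝ)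

/-- The point of `ℝⁿ × ℝ` with first component `x` and last coordinate `y`. -/
def pt {n : ℕ} (x : EuclideanSpace ℝ (Fin n)) (y : ℝ) : EucProd n :=
  (WithLp.equiv 2 (EuclideanSpace ℝ (Fin n) × ℝ)).symm (x, y)

/-- The epigraph of `f : ℝⁿ → ℝ`, viewed as a subset of `ℝⁿ × ℝ`. -/
def epigraph {n : ℕ} (f : EuclideanSpace ℝ (Fin n) → ℝ) : Set (EucProd n) :=
  {p | f ((WithLp.equiv 2 (EuclideanSpace ℝ (Fin n) × ℝ)) p).1 ≤
      ((WithLp.equiv 2 (EuclideanSpace ℝ (Fin n) × ℝ)) p).2}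

/-!
Let `(x, y)` be at least as close to the epigraph `L` as to `K`, and let `y < y'`; then `(x, y')`
is strictly closer to `L`. Suppose not, and take nearest points `(a, b) ∈ L` to `(x, y)` and
`(c, e) ∈ K` to `(x, y')`. Comparing squared distances gives `b ≤ e`, so `(a, e) ∈ L`, which forces
`dist x c ≤ dist x a`. As `K` contains the segment `{c} × (0, e]`, it contains `(c, b)`, whence
`dist x a ≤ dist x c`, and sliding from height `b` towards `y` shows `b = y`. Let `r` be the common
value of the two distances. The distance from `(x, y')` to `K`, hence to `L`, is at least `r`, so
`f ≥ y'` on the open ball of radius `r` about `x` and by continuity at `a` as well, contradicting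
`f a ≤ b = y < y'`. If `r = 0` there is no ball, but then `(x, y)` lies in both sets.
-/

section

open WithLp

/-- The epigraph of `f : E → ℝ` in `E × ℝ` with the `L²` product metric: `epigraph` for an arbitrary
space `E` in place of `ℝⁿ`. -/
def l2Epigraph {E : Type*} (f : E → ℝ) : Set (WithLp 2 (E × ℝ)) :=
  {p | f p.fst ≤ p.snd}

lemma isClosed_l2Epigraph {E : Type*} [TopologicalSpace E] {f : E → ℝ}
    (hf : LowerSemicontinuous f) : IsClosed (l2Epigraph f) :=
  hf.isClosed_epigraph.preimage (prod_continuous_ofLp 2 E ℝ)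

/-- The condition on `K` that excludes `(x, y₁) ∉ K` below `(x, y₂) ∈ K` at positive heights: each
vertical section of `K` is downward closed within `(0, ∞)`. -/
def IsLowerAboveZero {E : Type*} (K : Set (WithLp 2 (E × ℝ))) : Prop :=
  ∀ ⦃x : E⦄ ⦃y₁ y₂ : ℝ⦄, 0 < y₁ → y₁ ≤ y₂ → toLp 2 (x, y₂) ∈ K → toLp 2 (x, y₁) ∈ K

lemma isLowerAboveZero_iff_not_exists {E : Type*} {K : Set (WithLp 2 (E × ℝ))} :
    IsLowerAboveZero K ↔ ¬ ∃ (x : E) (y₁ y₂ : ℝ),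
      0 < y₁ ∧ y₁ < y₂ ∧ toLp 2 (x, y₁) ∉ K ∧ toLp 2 (x, y₂) ∈ K := by
  refine ⟨fun hK ⟨_, _, _, hy₁, hlt, hnot, hmem⟩ ↦ hnot (hK hy₁ hlt.le hmem),
    fun hno x y₁ y₂ hy₁ hle hmem ↦ ?_⟩
  rcases hle.eq_or_lt with rfl | hlt
  · exact hmem
  · exact by_contra fun hnot ↦ hno ⟨x, y₁, y₂, hy₁, hlt, hnot, hmem⟩

section PseudoMetricSpace

variable {E : Type*} [PseudoMetricSpace E] {x a c : E} {y y' b e : ℝ} {f : E → ℝ}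
  {K : Set (WithLp 2 (E × ℝ))}

lemma dist_toLp_sq (x a : E) (y b : ℝ) :
    dist (toLp 2 (x, y)) (toLp 2 (a, b)) ^ 2 = dist x a ^ 2 + (y - b) ^ 2 := by
  rw [prod_dist_eq_add (by norm_num), ENNReal.toReal_ofNat, ← Real.sqrt_eq_rpow,
    Real.sq_sqrt (by positivity)]
  simp only [toLp_fst, toLp_snd, Real.rpow_ofNat, Real.dist_eq, sq_abs]

lemma dist_toLp_le_dist_toLp_iff :
    dist (toLp 2 (x, y)) (toLp 2 (a, b)) ≤ dist (toLp 2 (x, y')) (toLp 2 (c, e)) ↔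
      dist x a ^ 2 + (y - b) ^ 2 ≤ dist x c ^ 2 + (y' - e) ^ 2 := by
  rw [← dist_toLp_sq, ← dist_toLp_sq, sq_le_sq₀ dist_nonneg dist_nonneg]

lemma dist_le_dist_of_dist_toLp_le (h : dist (toLp 2 (x, y)) (toLp 2 (a, b)) ≤
    dist (toLp 2 (x, y)) (toLp 2 (c, b))) : dist x a ≤ dist x c := by
  rw [dist_toLp_le_dist_toLp_iff, add_le_add_iff_right] at h
  exact (sq_le_sq₀ dist_nonneg dist_nonneg).1 h

lemma abs_sub_le_abs_sub_of_dist_toLp_le (hca : dist x c ≤ dist x a)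
    (h : dist (toLp 2 (x, y)) (toLp 2 (a, b)) ≤ dist (toLp 2 (x, y)) (toLp 2 (c, e))) :
    |y - b| ≤ |y - e| := by
  rw [dist_toLp_le_dist_toLp_iff] at h
  have : dist x c ^ 2 ≤ dist x a ^ 2 := by gcongr
  exact sq_le_sq.1 (by linarith)

lemma snd_le_snd_of_dist_toLp_le (hy : y < y')
    (h : dist (toLp 2 (x, y)) (toLp 2 (a, b)) ≤ dist (toLp 2 (x, y)) (toLp 2 (c, e)))
    (h' : dist (toLp 2 (x, y')) (toLp 2 (c, e)) ≤ dist (toLp 2 (x, y')) (toLp 2 (a, b))) :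
    b ≤ e := by
  rw [dist_toLp_le_dist_toLp_iff] at h h'
  have : 0 ≤ (y' - y) * (e - b) := by linarith
  exact sub_nonneg.1 (nonneg_of_mul_nonneg_right this (sub_pos.2 hy))

lemma le_snd_of_infDist_l2Epigraph_eq (hab : toLp 2 (a, b) ∈ l2Epigraph f)
    (h : infDist (toLp 2 (x, y)) (l2Epigraph f) = dist (toLp 2 (x, y)) (toLp 2 (a, b))) :
    y ≤ b := by
  by_contra! hby
  have hay : toLp 2 (a, y) ∈ l2Epigraph f := le_trans hab hby.le
  have := abs_sub_le_abs_sub_of_dist_toLp_le le_rfl (h ▸ infDist_le_dist_of_mem hay)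
  rw [sub_self, abs_zero, abs_nonpos_iff] at this
  linarith

lemma lt_of_dist_lt_infDist_l2Epigraph
    (h : dist x a < infDist (toLp 2 (x, y)) (l2Epigraph f)) : y < f a := by
  by_contra! hay
  have hdist : dist (toLp 2 (x, y)) (toLp 2 (a, y)) = dist x a := by
    rw [← sq_eq_sq₀ dist_nonneg dist_nonneg, dist_toLp_sq, sub_self, zero_pow two_ne_zero, add_zero]
  exact (infDist_le_dist_of_mem (s := l2Epigraph f) hay).not_gt (hdist ▸ h)

lemma IsLowerAboveZero.le_of_dist_le_infDist (hK : IsLowerAboveZero K)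
    (hce : toLp 2 (c, e) ∈ K) (hb : 0 < b) (hbe : b ≤ e) (hca : dist x c ≤ dist x a)
    (h : dist (toLp 2 (x, y)) (toLp 2 (a, b)) ≤ infDist (toLp 2 (x, y)) K) : b ≤ y := by
  by_contra! hyb
  obtain ⟨m, hm, hmb⟩ := exists_between (max_lt hyb hb)
  obtain ⟨hym, hm0⟩ := max_lt_iff.1 hm
  have hcm : toLp 2 (c, m) ∈ K := hK hm0 (hmb.le.trans hbe) hce
  have := abs_sub_le_abs_sub_of_dist_toLp_le hca (h.trans (infDist_le_dist_of_mem hcm))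
  rw [abs_of_neg (sub_neg.2 hyb), abs_of_neg (sub_neg.2 hym)] at this
  linarith

end PseudoMetricSpace

section NormedSpace

variable {E : Type*} [NormedAddCommGroup E] [NormedSpace ℝ E] {x a c : E} {y y' b e r : ℝ}
  {f : E → ℝ} {K : Set (WithLp 2 (E × ℝ))}

lemma le_of_le_infDist_l2Epigraph (hf : UpperSemicontinuous f) (hr : r ≠ 0)
    (hxa : dist x a ≤ r) (h : r ≤ infDist (toLp 2 (x, y)) (l2Epigraph f)) : y ≤ f a := by
  have hball : ball x r ⊆ f ⁻¹' Ici y := fun z hz ↦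
    (lt_of_dist_lt_infDist_l2Epigraph ((mem_ball'.1 hz).trans_le h)).le
  have hclosure := closure_minimal hball (hf.isClosed_preimage y)
  rw [closure_ball x hr] at hclosure
  exact hclosure (mem_closedBall'.2 hxa)

lemma le_of_nearest_points (hf : UpperSemicontinuous f) (hfpos : ∀ x, 0 < f x)
    (hdisj : Disjoint K (l2Epigraph f)) (hK : IsLowerAboveZero K)
    (h : infDist (toLp 2 (x, y)) (l2Epigraph f) ≤ infDist (toLp 2 (x, y)) K)
    (h' : infDist (toLp 2 (x, y')) K ≤ infDist (toLp 2 (x, y')) (l2Epigraph f))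
    (hab : toLp 2 (a, b) ∈ l2Epigraph f)
    (hab_dist : infDist (toLp 2 (x, y)) (l2Epigraph f) = dist (toLp 2 (x, y)) (toLp 2 (a, b)))
    (hce : toLp 2 (c, e) ∈ K)
    (hce_dist : infDist (toLp 2 (x, y')) K = dist (toLp 2 (x, y')) (toLp 2 (c, e))) :
    y' ≤ y := by
  by_contra! hy
  have hL_le {q} (hq : q ∈ K) : dist (toLp 2 (x, y)) (toLp 2 (a, b)) ≤ dist (toLp 2 (x, y)) q :=
    hab_dist ▸ h.trans (infDist_le_dist_of_mem hq)
  have hK_le {q} (hq : q ∈ l2Epigraph f) :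
      dist (toLp 2 (x, y')) (toLp 2 (c, e)) ≤ dist (toLp 2 (x, y')) q :=
    hce_dist ▸ h'.trans (infDist_le_dist_of_mem hq)
  have hb : 0 < b := (hfpos a).trans_le hab
  have hbe : b ≤ e := snd_le_snd_of_dist_toLp_le hy (hL_le hce) (hK_le hab)
  have hca : dist x c ≤ dist x a :=
    dist_le_dist_of_dist_toLp_le (hK_le (q := toLp 2 (a, e)) (le_trans hab hbe))
  have hcb : toLp 2 (c, b) ∈ K := hK hb hbe hce
  have hac : dist x a ≤ dist x c := dist_le_dist_of_dist_toLp_le (hL_le hcb)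
  obtain rfl : b = y := le_antisymm
    (hK.le_of_dist_le_infDist hce hb hbe hca (hab_dist ▸ h))
    (le_snd_of_infDist_l2Epigraph_eq hab hab_dist)
  have hr : dist x a ≠ 0 := by
    intro hr
    obtain rfl : x = a := dist_eq_zero.1 hr
    obtain rfl : x = c := dist_le_zero.1 (hca.trans_eq hr)
    exact hdisj.notMem_of_mem_left hcb hab
  have hr_le : dist x a ≤ infDist (toLp 2 (x, y')) (l2Epigraph f) :=
    hac.trans ((dist_fst_le (toLp 2 (x, y')) (toLp 2 (c, e))).trans (hce_dist ▸ h'))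
  exact ((le_of_le_infDist_l2Epigraph hf hr le_rfl hr_le).trans hab).not_gt hy

theorem infDist_l2Epigraph_lt_infDist [FiniteDimensional ℝ E] (hf : Continuous f)
    (hfpos : ∀ x, 0 < f x) (hKcl : IsClosed K) (hKne : K.Nonempty)
    (hdisj : Disjoint K (l2Epigraph f)) (hK : IsLowerAboveZero K) (hy : y < y')
    (h : infDist (toLp 2 (x, y)) (l2Epigraph f) ≤ infDist (toLp 2 (x, y)) K) :
    infDist (toLp 2 (x, y')) (l2Epigraph f) < infDist (toLp 2 (x, y')) K := by
  have : ProperSpace (WithLp 2 (E × ℝ)) := FiniteDimensional.proper ℝ _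
  have hLne : (l2Epigraph f).Nonempty := ⟨toLp 2 (0, f 0), le_refl (f 0)⟩
  by_contra! h'
  obtain ⟨⟨a, b⟩, hab, hab_dist⟩ :=
    (isClosed_l2Epigraph hf.lowerSemicontinuous).exists_infDist_eq_dist hLne (toLp 2 (x, y))
  obtain ⟨⟨c, e⟩, hce, hce_dist⟩ := hKcl.exists_infDist_eq_dist hKne (toLp 2 (x, y'))
  exact (le_of_nearest_points hf.upperSemicontinuous hfpos hdisj hK h h'
    hab hab_dist hce hce_dist).not_gt hy

theorem stmt8_general [FiniteDimensional ℝ E] (hf : Continuous f) (hfpos : ∀ x, 0 < f x)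
    (hKcl : IsClosed K) (hKne : K.Nonempty) (hdisj : Disjoint K (l2Epigraph f))
    (hK : IsLowerAboveZero K)
    (h : infDist (toLp 2 (x, y)) K = infDist (toLp 2 (x, y)) (l2Epigraph f))
    (h' : infDist (toLp 2 (x, y')) K = infDist (toLp 2 (x, y')) (l2Epigraph f)) : y = y' := by
  rcases lt_trichotomy y y' with hy | hy | hy
  · exact absurd h' (infDist_l2Epigraph_lt_infDist hf hfpos hKcl hKne hdisj hK hy h.ge).ne'
  · exact hy
  · exact absurd h (infDist_l2Epigraph_lt_infDist hf hfpos hKcl hKne hdisj hK hy h'.ge).ne'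

end NormedSpace

end

theorem stmt8 {n : ℕ} (f : EuclideanSpace ℝ (Fin n) → ℝ) (hf : Continuous f)
    (hfpos : ∀ x, 0 < f x)
    (L : Set (EucProd n)) (hL : L = epigraph f)
    (K : Set (EucProd n)) (hKcl : IsClosed K) (hKne : K.Nonempty)
    (hdisj : K ∩ L = ∅)
    (hno : ¬ ∃ (x₀ : EuclideanSpace ℝ (Fin n)) (y₁ y₂ : ℝ),
      0 < y₁ ∧ y₁ < y₂ ∧ pt x₀ y₁ ∉ K ∧ pt x₀ y₂ ∈ K) :
    ∀ x : EuclideanSpace ℝ (Fin n), ∀ y y' : ℝ,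
      Metric.infDist (pt x y) K = Metric.infDist (pt x y) L →
      Metric.infDist (pt x y') K = Metric.infDist (pt x y') L →
      y = y' := by
  subst hL
  exact fun x y y' ↦ stmt8_general hf hfpos hKcl hKne (disjoint_iff_inter_eq_empty.2 hdisj)
    (isLowerAboveZero_iff_not_exists.2 hno)

end
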